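/- Let G be a Moore graph of degree 57, let x, y be adjacent vertices of G, and let Γ be the induced subgraph of G on the vertices at distance 2 from both x and y. Let u, v, w be vertices of Γ with pairwise distances U = d(v,w), V = d(u,w), W = d(u,v) (distances in Γ), where U ≥ V ≥ W. If exactly one of U, V, W equals 3, then the number of vertices z of Γ with d(z,u) = d(z,v) = d(z,w) = 3 is 1. -/

import Mathlib

open SimpleGraph

/-!
Let `x, y` be adjacent. A vertex `z` at distance 2 from both is determined by its common neighbours
`a` with `x` and `b` with `y`, and every pair `(a, b)` occurs, so the vertices of `Γ` are the cells
of a grid (`gridEquiv`). Two of them in the same row or column have their only common neighbour in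
`G` next to `x` or `y`, hence outside `Γ`; any two others are at distance at most 2 in `Γ`. If all
degrees are at least 4, then no distance exceeds 3, so distance 3 is adjacency in the rook's graph
of the grid (`dist_farGraph_eq_three_iff`). There the claim is elementary: if `v, w` lie on a line
`ℓ` and the rook at `u` attacks neither, then the only cell attacked from all three is the one where
`ℓ` meets the perpendicular line through `u`.
-/

namespace Moore

section RookGraph

variable {A B : Type*}

/-- The rook's graph of the grid `A × B`: distinct cells are adjacent when they lie in the same row
or column. -/
abbrev rookGraph (A B : Type*) : SimpleGraph (A × B) := completeGraph A □ completeGraph B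

lemma rookGraph_adj {p q : A × B} : (rookGraph A B).Adj p q ↔ p ≠ q ∧ (p.1 = q.1 ∨ p.2 = q.2) := by
  simp only [boxProd_adj, completeGraph, top_adj, ne_eq, Prod.ext_iff]
  tauto

lemma existsUnique_rookGraph_adj {u v w : A × B} (hvw : (rookGraph A B).Adj v w)
    (huw : ¬ (rookGraph A B).Adj u w) (huv : ¬ (rookGraph A B).Adj u v) :
    ∃! z, (rookGraph A B).Adj z u ∧ (rookGraph A B).Adj z v ∧ (rookGraph A B).Adj z w := by
  rw [rookGraph_adj] at huv huw hvw
  simp only [rookGraph_adj]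
  obtain ⟨hne, h₁ | h₂⟩ := hvw
  · refine ⟨(v.1, u.2), by grind, fun z hz => ?_⟩
    have hz₁ : z.1 = v.1 := by grind
    have hz₂ : z.2 = u.2 := by grind
    exact Prod.ext hz₁ hz₂
  · refine ⟨(u.1, v.2), by grind, fun z hz => ?_⟩
    have hz₂ : z.2 = v.2 := by grind
    have hz₁ : z.1 = u.1 := by grind
    exact Prod.ext hz₁ hz₂

lemma existsUnique_rookGraph_adj_of_exactly_one_adj {u v w : A × B}
    (h : ((rookGraph A B).Adj v w ∧ ¬ (rookGraph A B).Adj u w ∧ ¬ (rookGraph A B).Adj u v) ∨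
      (¬ (rookGraph A B).Adj v w ∧ (rookGraph A B).Adj u w ∧ ¬ (rookGraph A B).Adj u v) ∨
      (¬ (rookGraph A B).Adj v w ∧ ¬ (rookGraph A B).Adj u w ∧ (rookGraph A B).Adj u v)) :
    ∃! z, (rookGraph A B).Adj z u ∧ (rookGraph A B).Adj z v ∧ (rookGraph A B).Adj z w := by
  obtain ⟨hvw, huw, huv⟩ | ⟨hvw, huw, huv⟩ | ⟨hvw, huw, huv⟩ := h
  · exact existsUnique_rookGraph_adj hvw huw huv
  · rw [SimpleGraph.adj_comm] at huv
    simpa only [and_left_comm] using existsUnique_rookGraph_adj huw hvw huv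
  · rw [SimpleGraph.adj_comm] at hvw huw
    simpa only [and_rotate] using existsUnique_rookGraph_adj huv hvw huw

end RookGraph

variable {α : Type*} {G : SimpleGraph α} {x y p q c : α}

lemma dist_eq_two_iff :
    G.dist p q = 2 ↔ p ≠ q ∧ ¬ G.Adj p q ∧ (G.commonNeighbors p q).Nonempty :=
  (ENat.toNat_eq_iff two_ne_zero).trans edist_eq_two_iff

/-- A chosen common neighbour of `p` and `q`; an arbitrary vertex if there is none. -/
noncomputable def commonNeighbor (G : SimpleGraph α) (p q : α) : α :=
  haveI : Nonempty α := ⟨p⟩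
  Classical.epsilon (· ∈ G.commonNeighbors p q)

lemma commonNeighbor_mem_commonNeighbors (h : G.dist p q = 2) :
    commonNeighbor G p q ∈ G.commonNeighbors p q :=
  Classical.epsilon_spec (dist_eq_two_iff.mp h).2.2

lemma adj_commonNeighbor_left (h : G.dist p q = 2) : G.Adj p (commonNeighbor G p q) :=
  (commonNeighbor_mem_commonNeighbors h).1

lemma adj_commonNeighbor_right (h : G.dist p q = 2) : G.Adj q (commonNeighbor G p q) :=
  (commonNeighbor_mem_commonNeighbors h).2

/-- The vertices at distance 2 from both `x` and `y`. -/
def farSet (G : SimpleGraph α) (x y : α) : Set α :=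
  {v : α | G.dist x v = 2 ∧ G.dist y v = 2}

/-- The graph `Γ` of the paper: `G` induced on the vertices at distance 2 from both `x` and `y`. -/
abbrev farGraph (G : SimpleGraph α) (x y : α) : SimpleGraph (farSet G x y) :=
  G.induce (farSet G x y)

lemma commonNeighbor_mem_neighborSet_sdiff (hp : p ∈ farSet G x y) :
    commonNeighbor G x p ∈ G.neighborSet x \ {y} := by
  refine ⟨adj_commonNeighbor_left hp.1, fun h : _ = y => ?_⟩
  exact (dist_eq_two_iff.mp hp.2).2.1 (h ▸ adj_commonNeighbor_right hp.1).symm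

lemma exists_mem_ne_ne_ne_of_four_le_encard {s : Set α} (hs : 4 ≤ s.encard) (a b c : α) :
    ∃ m ∈ s, m ≠ a ∧ m ≠ b ∧ m ≠ c := by
  classical
  have hcard : (({a, b, c} : Finset α) : Set α).encard < s.encard := by
    rw [Set.encard_coe_eq_coe_finsetCard]
    exact (Nat.cast_lt.mpr (Finset.card_le_three.trans_lt (by norm_num))).trans_le hs
  obtain ⟨m, hm, hm'⟩ := Set.not_subset.mp fun h => (Set.encard_le_encard h).not_gt hcard
  exact ⟨m, hm, by simpa using hm'⟩

lemma encard_neighborSet_of_isRegularOfDegree [G.LocallyFinite] {k : ℕ} (hG : G.IsRegularOfDegree k)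
    (p : α) : (G.neighborSet p).encard = k := by
  rw [Set.encard_eq_coe_toFinset_card]
  exact congrArg _ (hG.degree_eq p)

/-- Moore graphs of diameter 2 in the form used here: any two distinct vertices are joined by
exactly one path of length at most 2. Neither finiteness nor regularity is part of the definition,
so stars are included. -/
structure IsMoore (G : SimpleGraph α) : Prop where
  not_adj_of_adj : ∀ {p q c}, G.Adj p c → G.Adj q c → ¬ G.Adj p q
  existsUnique_adj : ∀ {p q}, p ≠ q → ¬ G.Adj p q → ∃! c, G.Adj p c ∧ G.Adj q c

lemma isMoore_of_isSRGWith [Fintype α] [DecidableRel G.Adj] {n k : ℕ}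
    (hG : G.IsSRGWith n k 0 1) : IsMoore G where
  not_adj_of_adj {p q c} hpc hqc hpq :=
    (Fintype.card_eq_zero_iff.mp (hG.of_adj p q hpq)).elim ⟨c, hpc, hqc⟩
  existsUnique_adj {p q} hne hpq := by
    obtain ⟨⟨c, hc⟩, hunique⟩ := Fintype.card_eq_one_iff.mp (hG.of_not_adj hne hpq)
    exact ⟨c, hc, fun d hd => congrArg Subtype.val (hunique ⟨d, hd⟩)⟩

namespace IsMoore

variable (hG : IsMoore G)
include hG

lemma dist_eq_two (hne : p ≠ q) (hpq : ¬ G.Adj p q) : G.dist p q = 2 :=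
  dist_eq_two_iff.mpr ⟨hne, hpq, (hG.existsUnique_adj hne hpq).exists⟩

lemma dist_eq_two_of_adj_of_adj (hne : p ≠ q) (hpc : G.Adj p c) (hqc : G.Adj q c) :
    G.dist p q = 2 :=
  hG.dist_eq_two hne (hG.not_adj_of_adj hpc hqc)

lemma commonNeighbor_eq (hne : p ≠ q) (hpc : G.Adj p c) (hqc : G.Adj q c) :
    commonNeighbor G p q = c := by
  have hpq := hG.not_adj_of_adj hpc hqc
  exact (hG.existsUnique_adj hne hpq).unique
    (commonNeighbor_mem_commonNeighbors (hG.dist_eq_two hne hpq)) ⟨hpc, hqc⟩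

lemma commonNeighbor_ne_of_adj (hxp : G.dist x p = 2) (hxq : G.dist x q = 2) (hpq : G.Adj p q) :
    commonNeighbor G x p ≠ commonNeighbor G x q := fun h =>
  hG.not_adj_of_adj (adj_commonNeighbor_right hxp) (h ▸ adj_commonNeighbor_right hxq) hpq

lemma dist_eq_two_iff_of_adj (hxp : G.dist x p = 2) (hpc : G.Adj p c) :
    G.dist x c = 2 ↔ c ≠ commonNeighbor G x p := by
  obtain ⟨hne, hxp', -⟩ := dist_eq_two_iff.mp hxp
  refine ⟨?_, fun hc => hG.dist_eq_two ?_ fun hxc => hc (hG.commonNeighbor_eq hne hxc hpc).symm⟩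
  · rintro hxc rfl
    exact (dist_eq_two_iff.mp hxc).2.1 (adj_commonNeighbor_left hxp)
  · rintro rfl
    exact hxp' hpc.symm

lemma dist_eq_two_iff_of_adj_of_adj (hxp : G.dist x p = 2) (hxq : G.dist x q = 2)
    (hne : p ≠ q) (hpc : G.Adj p c) (hqc : G.Adj q c) :
    G.dist x c = 2 ↔ commonNeighbor G x p ≠ commonNeighbor G x q := by
  rw [hG.dist_eq_two_iff_of_adj hxp hpc, not_iff_not]
  constructor
  · rintro rfl
    exact (hG.commonNeighbor_eq (dist_eq_two_iff.mp hxq).1 (adj_commonNeighbor_left hxp) hqc).symm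
  · intro h
    rw [← hG.commonNeighbor_eq hne hpc hqc]
    exact hG.commonNeighbor_eq hne (adj_commonNeighbor_right hxp)
      (h ▸ adj_commonNeighbor_right hxq)

lemma exists_adj_mem_farSet_of_commonNeighbor_eq (hdeg : 4 ≤ (G.neighborSet p).encard)
    (hp : p ∈ farSet G x y) (hq : q ∈ farSet G x y)
    (h : commonNeighbor G x p = commonNeighbor G x q) :
    ∃ m ∈ farSet G x y, G.Adj p m ∧ commonNeighbor G x m ≠ commonNeighbor G x q ∧
      commonNeighbor G y m ≠ commonNeighbor G y q := by
  -- the last vertex to avoid is the only possible neighbour of `p` with the `y`-coordinate of `q`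
  obtain ⟨m, hpm : G.Adj p m, hmx, hmy, hmq⟩ := exists_mem_ne_ne_ne_of_four_le_encard hdeg
    (commonNeighbor G x p) (commonNeighbor G y p) (commonNeighbor G p (commonNeighbor G y q))
  have hm : m ∈ farSet G x y := ⟨(hG.dist_eq_two_iff_of_adj hp.1 hpm).mpr hmx,
    (hG.dist_eq_two_iff_of_adj hp.2 hpm).mpr hmy⟩
  refine ⟨m, hm, hpm, ?_, fun hmq' => hmq ?_⟩
  · exact h ▸ hG.commonNeighbor_ne_of_adj hm.1 hp.1 hpm.symm
  · have hpq : p ≠ commonNeighbor G y q := by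
      rintro rfl
      exact (dist_eq_two_iff.mp hp.2).2.1 (adj_commonNeighbor_left hq.2)
    exact (hG.commonNeighbor_eq hpq hpm (hmq' ▸ adj_commonNeighbor_right hm.2).symm).symm

variable (hxy : G.Adj x y)
include hxy

lemma commonNeighbor_ne_commonNeighbor (hp : p ∈ farSet G x y) :
    commonNeighbor G x p ≠ commonNeighbor G y p := fun h =>
  hG.not_adj_of_adj (adj_commonNeighbor_left hp.1) (h ▸ adj_commonNeighbor_left hp.2) hxy

variable {a b : α}

lemma dist_eq_two_of_mem_neighborSet_sdiff (ha : a ∈ G.neighborSet x \ {y})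
    (hb : b ∈ G.neighborSet y \ {x}) : G.dist a b = 2 := by
  have hxb : x ≠ b := Ne.symm hb.2
  refine hG.dist_eq_two ?_ fun hab => ha.2 ?_
  · rintro rfl
    exact hG.not_adj_of_adj ha.1 hb.1 hxy
  · calc
      a = commonNeighbor G x b := (hG.commonNeighbor_eq hxb ha.1 hab.symm).symm
      _ = y := hG.commonNeighbor_eq hxb hxy hb.1.symm

lemma commonNeighbor_mem_farSet (ha : a ∈ G.neighborSet x \ {y})
    (hb : b ∈ G.neighborSet y \ {x}) : commonNeighbor G a b ∈ farSet G x y := by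
  have hab := hG.dist_eq_two_of_mem_neighborSet_sdiff hxy ha hb
  have hac := adj_commonNeighbor_left hab
  have hbc := adj_commonNeighbor_right hab
  constructor
  · refine hG.dist_eq_two_of_adj_of_adj (fun h => ?_) ha.1 hac.symm
    exact hG.not_adj_of_adj (h ▸ hbc.symm) hb.1 hxy
  · refine hG.dist_eq_two_of_adj_of_adj (fun h => ?_) hb.1 hbc.symm
    exact hG.not_adj_of_adj (h ▸ hac.symm) ha.1 hxy.symm

/-- The coordinates of a vertex at distance 2 from both `x` and `y`: its common neighbours with `x`
and with `y`. -/
@[simps apply]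
noncomputable def gridEquiv :
    farSet G x y ≃ ↥(G.neighborSet x \ {y}) × ↥(G.neighborSet y \ {x}) where
  toFun p := (⟨commonNeighbor G x p, commonNeighbor_mem_neighborSet_sdiff p.2⟩,
    ⟨commonNeighbor G y p, commonNeighbor_mem_neighborSet_sdiff (And.symm p.2)⟩)
  invFun c := ⟨commonNeighbor G c.1 c.2, hG.commonNeighbor_mem_farSet hxy c.1.2 c.2.2⟩
  left_inv p := Subtype.ext <|
    hG.commonNeighbor_eq (hG.commonNeighbor_ne_commonNeighbor hxy p.2)
      (adj_commonNeighbor_right p.2.1).symm (adj_commonNeighbor_right p.2.2).symm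
  right_inv := by
    rintro ⟨⟨a, ha⟩, b, hb⟩
    have hab := hG.dist_eq_two_of_mem_neighborSet_sdiff hxy ha hb
    have hfar := hG.commonNeighbor_mem_farSet hxy ha hb
    refine Prod.ext (Subtype.ext ?_) (Subtype.ext ?_)
    · exact hG.commonNeighbor_eq (dist_eq_two_iff.mp hfar.1).1 ha.1
        (adj_commonNeighbor_left hab).symm
    · exact hG.commonNeighbor_eq (dist_eq_two_iff.mp hfar.2).1 hb.1
        (adj_commonNeighbor_right hab).symm

lemma rookGraph_adj_gridEquiv {p q : farSet G x y} :
    (rookGraph _ _).Adj (hG.gridEquiv hxy p) (hG.gridEquiv hxy q) ↔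
      p ≠ q ∧ (commonNeighbor G x p = commonNeighbor G x q ∨
        commonNeighbor G y p = commonNeighbor G y q) := by
  rw [rookGraph_adj, (hG.gridEquiv hxy).injective.ne_iff]
  simp only [gridEquiv_apply, Subtype.mk.injEq]

lemma two_lt_edist_farGraph_iff {p q : farSet G x y} :
    2 < (farGraph G x y).edist p q ↔
      (rookGraph _ _).Adj (hG.gridEquiv hxy p) (hG.gridEquiv hxy q) := by
  rw [two_lt_edist_iff, hG.rookGraph_adj_gridEquiv hxy]
  refine and_congr_right fun hne' => ?_
  have hne : (p : α) ≠ q := Subtype.coe_ne_coe.mpr hne'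
  have mem_farSet_iff {c : α} (hpc : G.Adj p c) (hqc : G.Adj q c) : c ∈ farSet G x y ↔
      commonNeighbor G x p ≠ commonNeighbor G x q ∧ commonNeighbor G y p ≠ commonNeighbor G y q :=
    and_congr (hG.dist_eq_two_iff_of_adj_of_adj p.2.1 q.2.1 hne hpc hqc)
      (hG.dist_eq_two_iff_of_adj_of_adj p.2.2 q.2.2 hne hpc hqc)
  constructor
  · rintro ⟨hpq, hempty⟩
    by_contra! hcoord
    obtain ⟨c, hpc, hqc⟩ := (hG.existsUnique_adj hne hpq).exists
    exact Set.eq_empty_iff_forall_notMem.mp hempty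
      ⟨c, (mem_farSet_iff hpc hqc).mpr hcoord⟩ ⟨hpc, hqc⟩
  · intro hcoord
    refine ⟨fun hpq => ?_, Set.eq_empty_iff_forall_notMem.mpr fun c hc => ?_⟩
    · exact hcoord.elim (hG.commonNeighbor_ne_of_adj p.2.1 q.2.1 hpq)
        (hG.commonNeighbor_ne_of_adj p.2.2 q.2.2 hpq)
    · exact not_or.mpr ((mem_farSet_iff hc.1 hc.2).mp c.2) hcoord

lemma exists_adj_edist_farGraph_le_two {p q : farSet G x y} (hdeg : 4 ≤ (G.neighborSet p.1).encard)
    (hpq : (rookGraph _ _).Adj (hG.gridEquiv hxy p) (hG.gridEquiv hxy q)) :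
    ∃ m, (farGraph G x y).Adj p m ∧ (farGraph G x y).edist m q ≤ 2 := by
  obtain ⟨m, hm, hpm, hmx, hmy⟩ : ∃ m ∈ farSet G x y, G.Adj p m ∧
      commonNeighbor G x m ≠ commonNeighbor G x q ∧
      commonNeighbor G y m ≠ commonNeighbor G y q := by
    obtain ⟨-, h | h⟩ := (hG.rookGraph_adj_gridEquiv hxy).mp hpq
    · exact hG.exists_adj_mem_farSet_of_commonNeighbor_eq hdeg p.2 q.2 h
    · obtain ⟨m, hm, hpm, hmy, hmx⟩ := hG.exists_adj_mem_farSet_of_commonNeighbor_eq hdeg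
        (And.symm p.2) (And.symm q.2) h
      exact ⟨m, And.symm hm, hpm, hmx, hmy⟩
  refine ⟨⟨m, hm⟩, hpm, not_lt.mp ?_⟩
  rw [hG.two_lt_edist_farGraph_iff hxy, hG.rookGraph_adj_gridEquiv hxy]
  exact fun h => h.2.elim hmx hmy

lemma edist_farGraph_le_three {p q : farSet G x y} (hdeg : 4 ≤ (G.neighborSet p.1).encard) :
    (farGraph G x y).edist p q ≤ 3 := by
  rcases le_or_gt ((farGraph G x y).edist p q) 2 with hle | hlt
  · exact hle.trans (by norm_num)
  · obtain ⟨m, hpm, hmq⟩ := hG.exists_adj_edist_farGraph_le_two hxy hdeg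
      ((hG.two_lt_edist_farGraph_iff hxy).mp hlt)
    calc
      (farGraph G x y).edist p q
        ≤ (farGraph G x y).edist p m + (farGraph G x y).edist m q := SimpleGraph.edist_triangle
      _ ≤ 1 + 2 := add_le_add (edist_eq_one_iff_adj.mpr hpm).le hmq
      _ = 3 := by norm_num

lemma dist_farGraph_eq_three_iff {p q : farSet G x y} (hdeg : 4 ≤ (G.neighborSet p.1).encard) :
    (farGraph G x y).dist p q = 3 ↔
      (rookGraph _ _).Adj (hG.gridEquiv hxy p) (hG.gridEquiv hxy q) := by
  rw [← hG.two_lt_edist_farGraph_iff hxy]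
  calc
    (farGraph G x y).dist p q = 3 ↔ (farGraph G x y).edist p q = 3 :=
      ENat.toNat_eq_iff three_ne_zero
    _ ↔ 3 ≤ (farGraph G x y).edist p q :=
      (hG.edist_farGraph_le_three hxy hdeg).ge_iff_eq.symm
    _ ↔ 2 < (farGraph G x y).edist p q := ENat.natCast_add_one_le_iff (m := 2)

end IsMoore

end Moore

open Moore

theorem moore57_x333_exactly_one_eq_three_general {α : Type*} {G : SimpleGraph α}
    (hG : IsMoore G) (hdeg : ∀ p, 4 ≤ (G.neighborSet p).encard) {x y : α} (hxy : G.Adj x y)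
    {u v w : farSet G x y}
    (hone :
      ((farGraph G x y).dist v w = 3 ∧ (farGraph G x y).dist u w ≠ 3 ∧
        (farGraph G x y).dist u v ≠ 3) ∨
      ((farGraph G x y).dist v w ≠ 3 ∧ (farGraph G x y).dist u w = 3 ∧
        (farGraph G x y).dist u v ≠ 3) ∨
      ((farGraph G x y).dist v w ≠ 3 ∧ (farGraph G x y).dist u w ≠ 3 ∧
        (farGraph G x y).dist u v = 3)) :
    {z | (farGraph G x y).dist z u = 3 ∧ (farGraph G x y).dist z v = 3 ∧
      (farGraph G x y).dist z w = 3}.ncard = 1 := by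
  have dist_iff (p q : farSet G x y) := hG.dist_farGraph_eq_three_iff hxy (q := q) (hdeg p)
  simp only [ne_eq, dist_iff] at hone
  simp only [dist_iff, Set.ncard_eq_one, Set.eq_singleton_iff_unique_mem]
  exact ((hG.gridEquiv hxy).existsUnique_congr fun _ => Iff.rfl).mpr
    (existsUnique_rookGraph_adj_of_exactly_one_adj hone)

/-- Lemma 2(b). In the distance-regular graph `Γ` induced by a Moore graph of
degree 57 on the common distance-2 neighbors of two adjacent vertices `x, y`, if `u, v, w` have
pairwise distances `U = d(v,w) ≥ V = d(u,w) ≥ W = d(u,v)` and exactly one of `U, V, W` equals 3,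
then there is exactly one vertex `z` at distance 3 from all of `u`, `v`, `w`. -/
theorem moore57_x333_exactly_one_eq_three
    {α : Type*} [Fintype α] [DecidableEq α] (G : SimpleGraph α) [DecidableRel G.Adj]
    (hG : G.IsSRGWith 3250 57 0 1)
    (x y : α) (hxy : G.Adj x y)
    (Γ : SimpleGraph {v : α | G.dist x v = 2 ∧ G.dist y v = 2})
    (hΓ : Γ = G.induce {v : α | G.dist x v = 2 ∧ G.dist y v = 2})
    (u v w : {v : α | G.dist x v = 2 ∧ G.dist y v = 2})
    (U V W : ℕ)
    (hU : U = Γ.dist v w) (hV : V = Γ.dist u w) (hW : W = Γ.dist u v)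
    (hUV : V ≤ U) (hVW : W ≤ V)
    (hone : (U = 3 ∧ V ≠ 3 ∧ W ≠ 3) ∨ (U ≠ 3 ∧ V = 3 ∧ W ≠ 3) ∨ (U ≠ 3 ∧ V ≠ 3 ∧ W = 3)) :
    {z : {v : α | G.dist x v = 2 ∧ G.dist y v = 2} |
      Γ.dist z u = 3 ∧ Γ.dist z v = 3 ∧ Γ.dist z w = 3}.ncard = 1 := by
  subst hΓ hU hV hW
  exact moore57_x333_exactly_one_eq_three_general (isMoore_of_isSRGWith hG)
    (fun p => encard_neighborSet_of_isRegularOfDegree hG.regular p ▸ by norm_num) hxy hone
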